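/- For every integer k ≥ 2 and every ε > 0 there exists a finite loopless directed graph G with directed local chromatic number ψ_d(G) = k and fractional chromatic number of the underlying undirected graph χ*(G) > k^k/(k−1)^{k−1} − ε. -/

import Mathlib

open Classical

/-- The underlying undirected simple graph of a digraph given by an arc relation `D`. -/
def underlying {V : Type*} (D : V → V → Prop) : SimpleGraph V := SimpleGraph.fromRel D

/-- `A` is an independent set of the simple graph `G`. -/
def IsIndepF {V : Type*} (G : SimpleGraph V) (A : Finset V) : Prop :=
  ∀ u ∈ A, ∀ v ∈ A, ¬ G.Adj u v

/-- A fractional coloring of `G`: nonnegative weights on the independent sets of `G` such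
that the sets containing any fixed vertex have total weight at least `1`. -/
structure FracColoring {V : Type*} [Fintype V] (G : SimpleGraph V) where
  x : Finset V → ℝ
  nonneg : ∀ A, 0 ≤ x A
  supp : ∀ A, x A ≠ 0 → IsIndepF G A
  cover : ∀ v : V, 1 ≤ ∑ A : Finset V, if v ∈ A then x A else 0

/-- The total weight of a fractional coloring. -/
noncomputable def totalWeight {V : Type*} [Fintype V] {G : SimpleGraph V}
    (f : FracColoring G) : ℝ :=
  ∑ A : Finset V, f.x A

/-- The fractional chromatic number `χ*(G)`: the minimum total weight of a fractional
coloring of `G`. -/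
noncomputable def fracChrom {V : Type*} [Fintype V] (G : SimpleGraph V) : ℝ :=
  sInf {w : ℝ | ∃ f : FracColoring G, w = totalWeight f}

/-- The local weight of a fractional coloring of a digraph `D`:
`1` plus the maximum over vertices `v` of the total weight of the independent sets meeting
the out-neighborhood of `v`. -/
noncomputable def localWeight {V : Type*} [Fintype V] (D : V → V → Prop)
    (f : FracColoring (underlying D)) : ℝ :=
  1 + ⨆ v : V, ∑ A : Finset V, if ∃ u ∈ A, D v u then f.x A else 0

/-- The fractional directed local chromatic number `ψ_d*(D)`: the minimum local weight of a
fractional coloring of `D`. -/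
noncomputable def fracDirLocal {V : Type*} [Fintype V] (D : V → V → Prop) : ℝ :=
  sInf {w : ℝ | ∃ f : FracColoring (underlying D), w = localWeight D f}

/-- The directed local chromatic number `ψ_d(D)`: the minimum over proper colorings of the
underlying graph of `max_v |{c(u) : u ∈ N₊(v)}| + 1`. -/
noncomputable def dirLocalChrom {V : Type*} [Fintype V] (D : V → V → Prop) : ℕ :=
  sInf {n | ∃ c : V → ℕ, (∀ u v, (underlying D).Adj u v → c u ≠ c v) ∧
    n = Finset.univ.sup (fun v => (c '' {u | D v u}).ncard) + 1}

/-!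
In the universal digraph on `α × (ι → α)`, the vertex `(a, f)` has an arc to every vertex whose
first coordinate is a value of `f` other than `a`. Colouring by the first coordinate shows at most
`q = |ι|` colours in each out-neighbourhood, and a complete subdigraph of order `q + 1` shows that
this is optimal. If `I` is the set of first coordinates of an independent set `S`, then every
`(a, f) ∈ S` has `f` valued in `{a} ∪ Iᶜ`, so `|S| ≤ |I| (|Iᶜ| + 1) ^ q`. With `m = |α|`, the two
bases sum to `m + 1`, so AM-GM bounds `|S|` by `(m + 1) ^ (q + 1) q ^ q / (q + 1) ^ (q + 1)`.
Dividing the `m ^ (q + 1)` vertices by this bounds `χ*` from below, and `m → ∞` gives the claim.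
-/

section FracColoring

variable {V W : Type*} {G : SimpleGraph V} {H : SimpleGraph W}

lemma IsIndepF.map {A : Finset V} (hA : IsIndepF G A) (e : G ≃g H) :
    IsIndepF H (A.map e.toEquiv.toEmbedding) := by
  intro _ hu' _ hv'
  obtain ⟨u, hu, rfl⟩ := Finset.mem_map.1 hu'
  obtain ⟨v, hv, rfl⟩ := Finset.mem_map.1 hv'
  exact mt e.map_adj_iff.1 (hA u hu v hv)

variable [Fintype V] [Fintype W]

instance FracColoring.instNonempty (G : SimpleGraph V) : Nonempty (FracColoring G) := by
  refine ⟨⟨fun A => if IsIndepF G A then 1 else 0, fun A => ?_, fun A hA => ?_, fun v => ?_⟩⟩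
  · split_ifs <;> norm_num
  · by_contra hnot
    exact hA (if_neg hnot)
  · have hv : IsIndepF G {v} := by simp [IsIndepF]
    calc (1 : ℝ) = if v ∈ ({v} : Finset V) then (if IsIndepF G {v} then 1 else 0) else 0 := by
          rw [if_pos (Finset.mem_singleton_self v), if_pos hv]
      _ ≤ ∑ A : Finset V, if v ∈ A then (if IsIndepF G A then (1 : ℝ) else 0) else 0 :=
          Finset.single_le_sum
            (f := fun A : Finset V => if v ∈ A then (if IsIndepF G A then (1 : ℝ) else 0) else 0)
            (fun A _ => by positivity) (Finset.mem_univ {v})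

/-- The transport of a fractional coloring along a graph isomorphism: the image of `A` receives
the weight of `A`. -/
def FracColoring.map (e : G ≃g H) (f : FracColoring G) : FracColoring H where
  x B := f.x (e.toEquiv.finsetCongr.symm B)
  nonneg B := f.nonneg _
  supp B hB := by
    have hmap := (f.supp _ hB).map e
    rwa [← Equiv.finsetCongr_apply, Equiv.apply_symm_apply] at hmap
  cover w := by
    refine (f.cover (e.symm w)).trans_eq ?_
    refine Fintype.sum_equiv e.toEquiv.finsetCongr _ _ fun A => ?_
    have hmem : w ∈ e.toEquiv.finsetCongr A ↔ e.symm w ∈ A := Finset.mem_map_equiv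
    simp only [hmem, Equiv.symm_apply_apply]

lemma FracColoring.totalWeight_map (e : G ≃g H) (f : FracColoring G) :
    totalWeight (f.map e) = totalWeight f :=
  Equiv.sum_comp e.toEquiv.finsetCongr.symm f.x

lemma fracChrom_congr (e : G ≃g H) : fracChrom G = fracChrom H := by
  refine congrArg sInf (Set.Subset.antisymm ?_ ?_)
  · rintro _ ⟨f, rfl⟩
    exact ⟨f.map e, (f.totalWeight_map e).symm⟩
  · rintro _ ⟨f, rfl⟩
    exact ⟨f.map e.symm, (f.totalWeight_map e.symm).symm⟩

lemma FracColoring.card_le_sum_card_mul (f : FracColoring G) :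
    (Fintype.card V : ℝ) ≤ ∑ A : Finset V, (A.card : ℝ) * f.x A :=
  calc (Fintype.card V : ℝ) = ∑ _v : V, (1 : ℝ) := by simp
    _ ≤ ∑ v : V, ∑ A : Finset V, (if v ∈ A then f.x A else 0) :=
        Finset.sum_le_sum fun v _ => f.cover v
    _ = ∑ A : Finset V, ∑ v : V, (if v ∈ A then f.x A else 0) := Finset.sum_comm
    _ = ∑ A : Finset V, (A.card : ℝ) * f.x A :=
        Finset.sum_congr rfl fun A _ => by simp [Finset.sum_ite_mem]

lemma FracColoring.card_le_mul_totalWeight {α : ℝ} (f : FracColoring G)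
    (hα : ∀ A : Finset V, IsIndepF G A → (A.card : ℝ) ≤ α) :
    (Fintype.card V : ℝ) ≤ α * totalWeight f := by
  refine f.card_le_sum_card_mul.trans ?_
  rw [totalWeight, Finset.mul_sum]
  refine Finset.sum_le_sum fun A _ => ?_
  rcases eq_or_ne (f.x A) 0 with hA | hA
  · simp [hA]
  · exact mul_le_mul_of_nonneg_right (hα A (f.supp A hA)) (f.nonneg A)

theorem card_div_le_fracChrom {α : ℝ} (hpos : 0 < α)
    (hα : ∀ A : Finset V, IsIndepF G A → (A.card : ℝ) ≤ α) :
    (Fintype.card V : ℝ) / α ≤ fracChrom G := by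
  refine le_csInf ⟨_, Classical.arbitrary (FracColoring G), rfl⟩ ?_
  rintro _ ⟨f, rfl⟩
  exact (div_le_iff₀' hpos).2 (f.card_le_mul_totalWeight hα)

end FracColoring

section DirLocalChrom

variable {V W : Type*} {D : V → V → Prop} {D' : W → W → Prop}

lemma underlying_adj {u v : V} : (underlying D).Adj u v ↔ u ≠ v ∧ (D u v ∨ D v u) :=
  SimpleGraph.fromRel_adj D u v

/-- The isomorphism of underlying graphs induced by an isomorphism of digraphs. -/
def underlyingIso (e : D ≃r D') : underlying D ≃g underlying D' where
  toEquiv := e.toEquiv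
  map_rel_iff' := by simp [underlying_adj, e.map_rel_iff]

variable [Fintype V] [Fintype W]

lemma exists_dirLocalChrom_eq (D : V → V → Prop) :
    ∃ c : V → ℕ, (∀ u v, (underlying D).Adj u v → c u ≠ c v) ∧
      dirLocalChrom D = Finset.univ.sup (fun v => (c '' {u | D v u}).ncard) + 1 :=
  Nat.sInf_mem (s := {n | ∃ c : V → ℕ, (∀ u v, (underlying D).Adj u v → c u ≠ c v) ∧
      n = Finset.univ.sup (fun v => (c '' {u | D v u}).ncard) + 1})
    ⟨_, fun v => Fintype.equivFin V v,
      fun _ _ h => Fin.val_injective.ne ((Fintype.equivFin V).injective.ne h.ne), rfl⟩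

lemma dirLocalChrom_pos (D : V → V → Prop) : 0 < dirLocalChrom D := by
  obtain ⟨c, -, hc⟩ := exists_dirLocalChrom_eq D
  omega

lemma dirLocalChrom_le_iff {n : ℕ} (hn : 0 < n) :
    dirLocalChrom D ≤ n ↔
      ∃ c : (underlying D).Coloring ℕ, ∀ v, (c '' {u | D v u}).ncard < n := by
  constructor
  · intro hle
    obtain ⟨c, hc, hcard⟩ := exists_dirLocalChrom_eq D
    refine ⟨.mk c (hc _ _), fun v => ?_⟩
    have hv := Finset.le_sup (f := fun v => (c '' {u | D v u}).ncard) (Finset.mem_univ v)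
    exact (Nat.lt_succ_of_le hv).trans_le (hcard.ge.trans hle)
  · rintro ⟨c, hc⟩
    have hsup : Finset.univ.sup (fun v => (c '' {u | D v u}).ncard) < n :=
      (Finset.sup_lt_iff hn).2 fun v _ => hc v
    have hle : dirLocalChrom D ≤ Finset.univ.sup (fun v => (c '' {u | D v u}).ncard) + 1 :=
      Nat.sInf_le ⟨c, fun _ _ => c.valid, rfl⟩
    exact hle.trans hsup

lemma dirLocalChrom_le_of_embedding (φ : V ↪ W) (hφ : ∀ u v, D u v → D' (φ u) (φ v)) :
    dirLocalChrom D ≤ dirLocalChrom D' := by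
  have hpos := dirLocalChrom_pos D'
  obtain ⟨c, hc⟩ := (dirLocalChrom_le_iff hpos).1 le_rfl
  let φ' : underlying D →g underlying D' :=
    ⟨φ, fun h => underlying_adj.2 ⟨φ.injective.ne h.ne,
      (underlying_adj.1 h).2.imp (hφ _ _) (hφ _ _)⟩⟩
  refine (dirLocalChrom_le_iff hpos).2 ⟨c.comp φ', fun v => lt_of_le_of_lt ?_ (hc (φ v))⟩
  have hsub : c.comp φ' '' {u | D v u} ⊆ c '' {w | D' (φ v) w} := by
    rintro _ ⟨u, hu, rfl⟩
    exact ⟨φ u, hφ v u hu, rfl⟩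
  exact Set.ncard_le_ncard hsub

lemma dirLocalChrom_congr (e : D ≃r D') : dirLocalChrom D = dirLocalChrom D' :=
  le_antisymm
    (dirLocalChrom_le_of_embedding e.toEquiv.toEmbedding fun _ _ => e.map_rel_iff.2)
    (dirLocalChrom_le_of_embedding e.symm.toEquiv.toEmbedding fun _ _ => e.symm.map_rel_iff.2)

variable (V) in
lemma card_le_dirLocalChrom_ne :
    Fintype.card V ≤ dirLocalChrom (fun u v : V => u ≠ v) := by
  rcases isEmpty_or_nonempty V with _ | ⟨⟨v⟩⟩
  · simp
  obtain ⟨c, hc⟩ := (dirLocalChrom_le_iff (dirLocalChrom_pos _)).1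
    (le_refl (dirLocalChrom (fun u v : V => u ≠ v)))
  have hinj : Function.Injective c := fun u v huv => by
    by_contra hne
    exact c.valid (underlying_adj.2 ⟨hne, .inl hne⟩) huv
  have hout : (c '' {u | v ≠ u}).ncard + 1 = Fintype.card V := by
    have hcompl : {u | v ≠ u} = ({v} : Set V)ᶜ := by ext u; simp [eq_comm]
    have hadd := Set.ncard_add_ncard_compl ({v} : Set V)
    rw [Set.ncard_singleton, Nat.card_eq_fintype_card] at hadd
    rw [Set.ncard_image_of_injective _ hinj, hcompl, add_comm, hadd]
  exact hout ▸ hc v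

end DirLocalChrom

/-- The universal digraph with colour set `α`: the vertex `(a, f)` has an arc to `(b, g)` when `b`
lies in the list of colours `f` and differs from `a`. Indexing the list by `ι`, repetitions allowed,
bounds the number of colours in an out-neighbourhood by `|ι|`. -/
def universalDigraph (α ι : Type*) (v w : α × (ι → α)) : Prop :=
  w.1 ∈ Set.range v.2 ∧ w.1 ≠ v.1

section UniversalDigraph

variable {α ι : Type*}

lemma universalDigraph_irrefl (v : α × (ι → α)) : ¬ universalDigraph α ι v v :=
  fun h => h.2 rfl

lemma fst_ne_of_underlying_universalDigraph_adj {v w : α × (ι → α)}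
    (h : (underlying (universalDigraph α ι)).Adj v w) : v.1 ≠ w.1 :=
  (underlying_adj.1 h).2.elim (fun hvw => hvw.2.symm) (fun hwv => hwv.2)

lemma apply_mem_insert_compl_of_isIndepF {S : Finset (α × (ι → α))} [Fintype α]
    (hS : IsIndepF (underlying (universalDigraph α ι)) S) {v : α × (ι → α)} (hv : v ∈ S) (i : ι) :
    v.2 i ∈ insert v.1 (S.image Prod.fst)ᶜ := by
  by_contra hmem
  simp only [Finset.mem_insert, Finset.mem_compl, not_or, not_not] at hmem
  obtain ⟨hne, himage⟩ := hmem
  obtain ⟨w, hw, hwi⟩ := Finset.mem_image.1 himage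
  have hfst : w.1 ≠ v.1 := hwi ▸ hne
  have hvw : v ≠ w := fun h => hfst (congrArg Prod.fst h.symm)
  exact hS v hv w hw (underlying_adj.2 ⟨hvw, .inl ⟨⟨i, hwi.symm⟩, hfst⟩⟩)

variable [Fintype α] [Fintype ι]

lemma card_le_of_isIndepF_universalDigraph {S : Finset (α × (ι → α))}
    (hS : IsIndepF (underlying (universalDigraph α ι)) S) :
    S.card ≤ (S.image Prod.fst).card * ((S.image Prod.fst)ᶜ.card + 1) ^ Fintype.card ι := by
  set I := S.image Prod.fst
  rw [mul_comm]
  refine Finset.card_le_mul_card_image S _ fun a _ => ?_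
  have hmaps : ∀ v ∈ S.filter (fun v => v.1 = a),
      v.2 ∈ Fintype.piFinset fun _ : ι => insert a Iᶜ := by
    intro v hv
    obtain ⟨hvS, rfl⟩ := Finset.mem_filter.1 hv
    exact Fintype.mem_piFinset.2 (apply_mem_insert_compl_of_isIndepF hS hvS)
  have hinj : Set.InjOn Prod.snd (S.filter fun v => v.1 = a : Set (α × (ι → α))) := by
    intro v hv w hw hvw
    exact Prod.ext ((Finset.mem_filter.1 hv).2.trans (Finset.mem_filter.1 hw).2.symm) hvw
  calc (S.filter fun v => v.1 = a).card
      ≤ (Fintype.piFinset fun _ : ι => insert a Iᶜ).card :=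
        Finset.card_le_card_of_injOn Prod.snd hmaps hinj
    _ = (insert a Iᶜ).card ^ Fintype.card ι := by
        rw [Fintype.card_piFinset, Finset.prod_const, Finset.card_univ]
    _ ≤ (Iᶜ.card + 1) ^ Fintype.card ι :=
        Nat.pow_le_pow_left (Finset.card_insert_le _ _) _

variable [DecidableEq ι]

lemma dirLocalChrom_universalDigraph_le :
    dirLocalChrom (universalDigraph α ι) ≤ Fintype.card ι + 1 := by
  let code : α → ℕ := fun a => Fintype.equivFin α a
  have hcode : Function.Injective code :=
    Fin.val_injective.comp (Fintype.equivFin α).injective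
  refine (dirLocalChrom_le_iff (Nat.succ_pos _)).2
    ⟨.mk (fun v => code v.1) fun h => hcode.ne (fst_ne_of_underlying_universalDigraph_adj h),
      fun v => Nat.lt_succ_of_le ?_⟩
  calc ((fun w : α × (ι → α) => code w.1) '' {w | universalDigraph α ι v w}).ncard
      ≤ ((fun i => code (v.2 i)) '' Set.univ).ncard := by
        refine Set.ncard_le_ncard ?_
        rintro _ ⟨w, ⟨⟨i, hi⟩, -⟩, rfl⟩
        exact ⟨i, trivial, congrArg code hi⟩
    _ ≤ (Set.univ : Set ι).ncard := Set.ncard_image_le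
    _ = Fintype.card ι := by rw [Set.ncard_univ, Nat.card_eq_fintype_card]

lemma card_lt_dirLocalChrom_universalDigraph (h : Fintype.card ι < Fintype.card α) :
    Fintype.card ι < dirLocalChrom (universalDigraph α ι) := by
  obtain ⟨φ⟩ : Nonempty (Option ι ↪ α) :=
    Function.Embedding.nonempty_of_card_le (by rwa [Fintype.card_option])
  -- As `i` ranges over `ι`, `Equiv.swap none o (some i)` ranges over all of `Option ι` except `o`.
  let clique : Option ι ↪ α × (ι → α) :=
    ⟨fun o => (φ o, fun i => φ (Equiv.swap none o (some i))),
      fun _ _ h => φ.injective (congrArg Prod.fst h)⟩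
  have hclique : ∀ o o', o ≠ o' → universalDigraph α ι (clique o) (clique o') := by
    intro o o' hne
    have hswap : Equiv.swap none o o' ≠ none := fun h =>
      hne ((Equiv.swap none o).injective (h.trans (Equiv.swap_apply_right _ _).symm)).symm
    obtain ⟨i, hi⟩ := Option.ne_none_iff_exists.1 hswap
    exact ⟨⟨i, congrArg φ (by rw [hi, Equiv.swap_apply_self])⟩, φ.injective.ne hne.symm⟩
  calc Fintype.card ι < Fintype.card (Option ι) := by simp
    _ ≤ dirLocalChrom (fun o o' : Option ι => o ≠ o') := card_le_dirLocalChrom_ne _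
    _ ≤ dirLocalChrom (universalDigraph α ι) := dirLocalChrom_le_of_embedding clique hclique

theorem dirLocalChrom_universalDigraph (h : Fintype.card ι < Fintype.card α) :
    dirLocalChrom (universalDigraph α ι) = Fintype.card ι + 1 :=
  le_antisymm dirLocalChrom_universalDigraph_le (card_lt_dirLocalChrom_universalDigraph h)

end UniversalDigraph

lemma mul_pow_mul_le_add_pow {a b : ℝ} (ha : 0 ≤ a) (hb : 0 ≤ b) (q : ℕ) :
    a * b ^ q * (((q : ℝ) + 1) ^ (q + 1) / (q : ℝ) ^ q) ≤ (a + b) ^ (q + 1) := by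
  rcases Nat.eq_zero_or_pos q with rfl | hq
  · simpa using hb
  set y := b / q
  have hb_eq : b = q * y := by simp only [y]; field_simp
  have hy : 0 ≤ y := by positivity
  -- Equality holds at `a = y`; Bernoulli's inequality expands `(a + q y) ^ (q + 1)` around it.
  have hbernoulli := pow_add_mul_le_add_pow (a := (q + 1) * y) (b := a - y) (by positivity)
    (by linarith) (q + 1)
  calc a * b ^ q * (((q : ℝ) + 1) ^ (q + 1) / (q : ℝ) ^ q)
      = ((q + 1) * y) ^ (q + 1) + (q + 1 : ℕ) * ((q + 1) * y) ^ q * (a - y) := by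
        rw [hb_eq]
        push_cast
        rw [mul_pow, mul_pow, mul_pow]
        field_simp
        ring
    _ ≤ ((q + 1) * y + (a - y)) ^ (q + 1) := hbernoulli
    _ = (a + b) ^ (q + 1) := by rw [hb_eq]; ring

theorem le_fracChrom_universalDigraph (α ι : Type*) [Fintype α] [Fintype ι] [DecidableEq ι] :
    ((Fintype.card α : ℝ) / (Fintype.card α + 1)) ^ (Fintype.card ι + 1) *
        (((Fintype.card ι : ℝ) + 1) ^ (Fintype.card ι + 1) /
          (Fintype.card ι : ℝ) ^ Fintype.card ι) ≤
      fracChrom (underlying (universalDigraph α ι)) := by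
  set m := Fintype.card α with hm
  set q := Fintype.card ι with hq
  set C : ℝ := ((q : ℝ) + 1) ^ (q + 1) / (q : ℝ) ^ q
  have hC : 0 < C := div_pos (by positivity) (by exact_mod_cast Nat.pow_self_pos)
  have hindep : ∀ S, IsIndepF (underlying (universalDigraph α ι)) S →
      (S.card : ℝ) ≤ ((m : ℝ) + 1) ^ (q + 1) / C := by
    intro S hS
    have hcard := card_le_of_isIndepF_universalDigraph hS
    set I := S.image Prod.fst
    have hsum : (I.card : ℝ) + (Iᶜ.card + 1) = m + 1 := by
      rw [hm, ← I.card_add_card_compl]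
      push_cast
      ring
    rw [le_div_iff₀ hC, ← hsum]
    calc (S.card : ℝ) * C ≤ I.card * ((Iᶜ.card : ℝ) + 1) ^ q * C :=
          mul_le_mul_of_nonneg_right (by exact_mod_cast hcard) hC.le
      _ ≤ (I.card + (Iᶜ.card + 1)) ^ (q + 1) :=
          mul_pow_mul_le_add_pow (by positivity) (by positivity) q
  have hvertices : (Fintype.card (α × (ι → α)) : ℝ) = (m : ℝ) ^ (q + 1) := by
    rw [Fintype.card_prod, Fintype.card_fun, ← hm, ← hq, ← pow_succ', Nat.cast_pow]
  calc ((m : ℝ) / (m + 1)) ^ (q + 1) * C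
      = Fintype.card (α × (ι → α)) / (((m : ℝ) + 1) ^ (q + 1) / C) := by
        rw [hvertices, div_pow, div_div_eq_mul_div, div_mul_eq_mul_div]
    _ ≤ fracChrom (underlying (universalDigraph α ι)) :=
        card_div_le_fracChrom (by positivity) hindep

/-- For every integer `k ≥ 2` and `ε > 0` there is a finite loopless digraph `D` with
`ψ_d(D) = k` and `χ*` of the underlying graph exceeding `k^k/(k-1)^(k-1) - ε`. -/
theorem stmt8 (k : ℕ) (hk : 2 ≤ k) (ε : ℝ) (hε : 0 < ε) :
    ∃ (n : ℕ) (D : Fin n → Fin n → Prop),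
      (∀ v, ¬ D v v) ∧ dirLocalChrom D = k ∧
      (k : ℝ) ^ k / ((k : ℝ) - 1) ^ (k - 1) - ε < fracChrom (underlying D) := by
  obtain ⟨q, rfl⟩ : ∃ q, k = q + 1 := ⟨k - 1, by omega⟩
  simp only [Nat.cast_add_one, add_sub_cancel_right, Nat.add_sub_cancel]
  set C : ℝ := ((q : ℝ) + 1) ^ (q + 1) / (q : ℝ) ^ q
  have hlim : Filter.Tendsto (fun m : ℕ => ((m : ℝ) / (m + 1)) ^ (q + 1) * C)
      Filter.atTop (nhds C) := by
    simpa using ((tendsto_natCast_div_add_atTop (1 : ℝ)).pow (q + 1)).mul_const C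
  obtain ⟨m, hm, hqm⟩ := ((hlim.eventually_const_lt (sub_lt_self C hε)).and
    (Filter.eventually_gt_atTop q)).exists
  let φ := (Fintype.equivFin (Fin m × (Fin q → Fin m))).symm
  refine ⟨_, φ ⁻¹'o universalDigraph (Fin m) (Fin q),
    fun v => universalDigraph_irrefl (φ v), ?_, ?_⟩
  · rw [dirLocalChrom_congr (RelIso.preimage φ _),
      dirLocalChrom_universalDigraph (by simpa using hqm), Fintype.card_fin]
  · rw [fracChrom_congr (underlyingIso (RelIso.preimage φ _))]
    refine hm.trans_le ?_
    simpa only [Fintype.card_fin] using le_fracChrom_universalDigraph (Fin m) (Fin q)
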